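/- Fix an odd integer c ≥ 5. Then the six groups G_U(c, R_y, R_x), obtained from the six choices of relator words R_y ∈ {y³·s₃⁻¹, y³·s₃⁻¹·t_c⁻¹} and R_x ∈ {x³·t₃⁻¹·t₄⁻²·t₅⁻¹, x³·t₃⁻¹·t₄⁻²·t₅⁻¹·t_c⁻¹, x³·t₃⁻¹·t₄⁻²·t₅⁻¹·t_c⁻²}, are pairwise non-isomorphic. -/

import Mathlib

/-- The commutator `[g,h] = g⁻¹h⁻¹gh`. -/
def fcomm {G : Type*} [Group G] (g h : G) : G := g⁻¹ * h⁻¹ * g * h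

namespace GUdef

/-- The generator `x` (as a word in the free group). -/
def xw : FreeGroup ℕ := FreeGroup.of 0

/-- The generator `y`. -/
def yw : FreeGroup ℕ := FreeGroup.of 1

/-- The generator `s₃`. -/
def s3w : FreeGroup ℕ := FreeGroup.of 2

/-- The generator `t_j` (meaningful for `2 ≤ j ≤ c`). -/
def tw (j : ℕ) : FreeGroup ℕ := FreeGroup.of (j + 1)

/-- The defining relators of `G_U(c, R_y, R_x)`:
`t₂ = [y,x]`, `s₃ = [t₂,x]`, `t_j = [t_{j−1},y]` for `3 ≤ j ≤ c`,
`t_j³ = t_{j+2}²·t_{j+3}` for `2 ≤ j ≤ c−3`, `t_{c−2}³ = t_c²`, `s₃³ = 1`,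
`R_y = 1`, `R_x = 1`.  (The superfluous generators `FreeGroup.of n` with
`n ≥ c+2` are killed, so that the effective generators are exactly
`x, y, s₃, t₂, …, t_c`.) -/
def rels (c : ℕ) (Ry Rx : FreeGroup ℕ) : Set (FreeGroup ℕ) :=
  {tw 2 * (fcomm yw xw)⁻¹, s3w * (fcomm (tw 2) xw)⁻¹, s3w ^ 3,
    tw (c - 2) ^ 3 * (tw c ^ 2)⁻¹, Ry, Rx} ∪
  {w | ∃ j : ℕ, 3 ≤ j ∧ j ≤ c ∧ w = tw j * (fcomm (tw (j - 1)) yw)⁻¹} ∪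
  {w | ∃ j : ℕ, 2 ≤ j ∧ j ≤ c - 3 ∧ w = tw j ^ 3 * (tw (j + 2) ^ 2 * tw (j + 3))⁻¹} ∪
  {w | ∃ n : ℕ, c + 2 ≤ n ∧ w = FreeGroup.of n}

/-- The group `G_U(c, R_y, R_x)`. -/
abbrev GU (c : ℕ) (Ry Rx : FreeGroup ℕ) : Type := PresentedGroup (rels c Ry Rx)

/-- The two admissible relator words `R_y ∈ {y³·s₃⁻¹, y³·s₃⁻¹·t_c⁻¹}`. -/
def RySet (c : ℕ) : Set (FreeGroup ℕ) := {yw ^ 3 * s3w⁻¹, yw ^ 3 * s3w⁻¹ * (tw c)⁻¹}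

/-- The three admissible relator words
`R_x ∈ {x³·t₃⁻¹·t₄⁻²·t₅⁻¹, x³·t₃⁻¹·t₄⁻²·t₅⁻¹·t_c⁻¹, x³·t₃⁻¹·t₄⁻²·t₅⁻¹·t_c⁻²}`. -/
def RxSet (c : ℕ) : Set (FreeGroup ℕ) :=
  {xw ^ 3 * (tw 3)⁻¹ * (tw 4 ^ 2)⁻¹ * (tw 5)⁻¹,
   xw ^ 3 * (tw 3)⁻¹ * (tw 4 ^ 2)⁻¹ * (tw 5)⁻¹ * (tw c)⁻¹,
   xw ^ 3 * (tw 3)⁻¹ * (tw 4 ^ 2)⁻¹ * (tw 5)⁻¹ * (tw c ^ 2)⁻¹}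

end GUdef

open GUdef

/-!
A homomorphism out of `G_U(c, R_y, R_x)` is a pair `(x, y)` satisfying the relations, since the
other generators are commutators in `x` and `y`. Let `α` and `β` be the exponents of `t_c` in `R_y`
and `R_x`.

For each target `(a, b)` we use a group of order `3 ^ (c + 2)` built from a quotient `R` of
`ℤ₃[ζ₃]` of length `c`. Its uniformizer `p` is chosen so that `ζ = 1 + p` is a cube root of unity
with `1 + ζ + ζ² = -b p ^ (c - 1)`; this perturbation records `b`. The group is an extension of
`ℤ/9`, acting through `ζ`, by `R` with its addition twisted by an alternating form on `R / p²`, and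
the twist records `a`. In it `y` acts on `R` as `ζ ^ q`, so the `t_j` are essentially the elements
`-(ζ ^ q - 1) ^ (j - 1) u` of `R`, where `u` is the component of `x` in `R`.

An isomorphism from `G_U` with exponents `(α, β)` to `G_U` with exponents `(a, b)` yields
generators `x`, `y` of the model satisfying the relations for `(α, β)`. The relation `s₃³ = 1`
forces `x` to act trivially on `R`; comparing the coefficients of `p ^ (c - 1)` in `R_x` and `R_y`
then gives `β q ^ (c - 1) = b` and `α q ^ (c - 1) = a q u₀` modulo `3`, with `q` and the residue
`u₀` of `u` nonzero. For odd `c` we have `q ^ (c - 1) = 1`, so `β = b`, while `α` and `a` vanish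
together.
-/

section Relations

variable {G H : Type*} [Group G] [Group H]

lemma map_fcomm (φ : G →* H) (g h : G) : φ (fcomm g h) = fcomm (φ g) (φ h) := by
  simp only [fcomm, map_mul, map_inv]

lemma fcomm_eq_of_mul_eq {g h k : G} (e : h * g * k = g * h) : fcomm g h = k := by
  rw [fcomm, mul_assoc, ← mul_inv_rev, ← e, inv_mul_cancel_left]

lemma fcomm_mul_left_of_mem_center {z : G} (hz : z ∈ Subgroup.center G) (g h : G) :
    fcomm (g * z) h = fcomm g h := by
  have hcomm := Subgroup.mem_center_iff.1 hz
  calc fcomm (g * z) h = z⁻¹ * (g⁻¹ * h⁻¹ * g * (z * h)) := by simp only [fcomm]; group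
    _ = z⁻¹ * (fcomm g h * z) := by rw [← hcomm h, fcomm, mul_assoc _ h z]
    _ = fcomm g h := by rw [hcomm, inv_mul_cancel_left]

/-- The elements `t_j` built from `x` and `y`: `t₂ = [y,x]` and `t_j = [t_{j-1},y]` for `j ≥ 3`,
with the junk value `1` for `j < 2`. -/
def tSeq (x y : G) : ℕ → G
  | 0 | 1 => 1
  | 2 => fcomm y x
  | j + 3 => fcomm (tSeq x y (j + 2)) y

lemma tSeq_succ (x y : G) {j : ℕ} (hj : 2 ≤ j) : tSeq x y (j + 1) = fcomm (tSeq x y j) y := by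
  obtain ⟨k, rfl⟩ := Nat.exists_eq_add_of_le' hj
  rfl

lemma map_tSeq (φ : G →* H) (x y : G) : ∀ j, φ (tSeq x y j) = tSeq (φ x) (φ y) j
  | 0 | 1 => map_one φ
  | 2 => map_fcomm φ y x
  | j + 3 => by rw [tSeq, map_fcomm, map_tSeq φ x y (j + 2), tSeq]

/-- The relations of `G_U` as conditions on the pair `(x, y)` alone, the other generators being
eliminated; `α` and `β` are the exponents of `t_c` in `R_y` and `R_x`. -/
structure IsGUPair (c α β : ℕ) (x y : G) : Prop where
  s_cube : fcomm (tSeq x y 2) x ^ 3 = 1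
  t_cube : ∀ j, 2 ≤ j → j ≤ c - 3 → tSeq x y j ^ 3 = tSeq x y (j + 2) ^ 2 * tSeq x y (j + 3)
  t_cube_last : tSeq x y (c - 2) ^ 3 = tSeq x y c ^ 2
  y_cube : y ^ 3 = tSeq x y c ^ α * fcomm (tSeq x y 2) x
  x_cube : x ^ 3 = tSeq x y c ^ β * tSeq x y 5 * tSeq x y 4 ^ 2 * tSeq x y 3

lemma IsGUPair.map {c α β : ℕ} {x y : G} (h : IsGUPair c α β x y) (φ : G →* H) :
    IsGUPair c α β (φ x) (φ y) := by
  constructor <;> simp only [← map_tSeq, ← map_fcomm, ← map_pow, ← map_mul]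
  · rw [h.s_cube, map_one]
  · exact fun j h2 hj => congrArg φ (h.t_cube j h2 hj)
  · rw [h.t_cube_last]
  · rw [h.y_cube]
  · rw [h.x_cube]

end Relations

namespace GUdef

/-- The word `y³ s₃⁻¹ t_c^(-α)`. -/
def ryWord (c α : ℕ) : FreeGroup ℕ := yw ^ 3 * s3w⁻¹ * (tw c ^ α)⁻¹

/-- The word `x³ t₃⁻¹ t₄⁻² t₅⁻¹ t_c^(-β)`. -/
def rxWord (c β : ℕ) : FreeGroup ℕ :=
  xw ^ 3 * (tw 3)⁻¹ * (tw 4 ^ 2)⁻¹ * (tw 5)⁻¹ * (tw c ^ β)⁻¹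

lemma exists_eq_ryWord {c : ℕ} {w : FreeGroup ℕ} (hw : w ∈ RySet c) :
    ∃ α < 2, w = ryWord c α := by
  rcases hw with rfl | rfl
  · exact ⟨0, by norm_num, by simp [ryWord]⟩
  · exact ⟨1, by norm_num, by simp [ryWord]⟩

lemma exists_eq_rxWord {c : ℕ} {w : FreeGroup ℕ} (hw : w ∈ RxSet c) :
    ∃ β < 3, w = rxWord c β := by
  rcases hw with rfl | rfl | rfl
  · exact ⟨0, by norm_num, by simp [rxWord]⟩
  · exact ⟨1, by norm_num, by simp [rxWord]⟩
  · exact ⟨2, by norm_num, by simp [rxWord]⟩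

section Generators

variable {c : ℕ} {Ry Rx : FreeGroup ℕ}

lemma of_two_eq : (.of 2 : GU c Ry Rx) = fcomm (.of 3) (.of 0) := by
  have h := PresentedGroup.one_of_mem (rels := rels c Ry Rx)
    (x := s3w * (fcomm (tw 2) xw)⁻¹) (by simp [rels])
  rwa [map_mul, map_inv, map_fcomm, mul_inv_eq_one] at h

lemma of_succ_eq_tSeq {j : ℕ} (hj : 2 ≤ j) (hjc : j ≤ c) :
    (.of (j + 1) : GU c Ry Rx) = tSeq (.of 0) (.of 1) j := by
  induction j, hj using Nat.le_induction with
  | base =>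
    have h := PresentedGroup.one_of_mem (rels := rels c Ry Rx)
      (x := tw 2 * (fcomm yw xw)⁻¹) (by simp [rels])
    rwa [map_mul, map_inv, map_fcomm, mul_inv_eq_one] at h
  | succ j hj ih =>
    have h := PresentedGroup.one_of_mem (rels := rels c Ry Rx)
      (x := tw (j + 1) * (fcomm (tw j) yw)⁻¹)
      (.inl (.inl (.inr ⟨j + 1, by omega, hjc, rfl⟩)))
    rw [map_mul, map_inv, map_fcomm, mul_inv_eq_one] at h
    rw [tSeq_succ _ _ hj, ← ih (by omega)]
    exact h

lemma of_eq_one_of_le {n : ℕ} (hn : c + 2 ≤ n) : (.of n : GU c Ry Rx) = 1 :=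
  PresentedGroup.one_of_mem (.inr ⟨n, hn, rfl⟩)

lemma closure_of_zero_of_one (hc : 2 ≤ c) :
    Subgroup.closure {(.of 0 : GU c Ry Rx), .of 1} = ⊤ := by
  set K := Subgroup.closure {(.of 0 : GU c Ry Rx), .of 1}
  have hx : .of 0 ∈ K := Subgroup.subset_closure (by simp)
  have hy : .of 1 ∈ K := Subgroup.subset_closure (by simp)
  have hcomm {g h : GU c Ry Rx} (hg : g ∈ K) (hh : h ∈ K) : fcomm g h ∈ K :=
    mul_mem (mul_mem (mul_mem (inv_mem hg) (inv_mem hh)) hg) hh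
  have ht : ∀ j, tSeq (.of 0) (.of 1) j ∈ K := by
    intro j
    induction j using tSeq.induct with
    | case1 | case2 => exact one_mem K
    | case3 => exact hcomm hy hx
    | case4 j ih => exact hcomm ih hy
  rw [eq_top_iff, ← PresentedGroup.closure_range_of, Subgroup.closure_le]
  rintro _ ⟨n, rfl⟩
  match n with
  | 0 => exact hx
  | 1 => exact hy
  | 2 =>
    rw [of_two_eq, of_succ_eq_tSeq le_rfl hc]
    exact hcomm (ht 2) hx
  | j + 3 =>
    by_cases hj : j + 2 ≤ c
    · rw [of_succ_eq_tSeq (by omega) hj]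
      exact ht _
    · rw [of_eq_one_of_le (by omega)]
      exact one_mem K

lemma range_eq_closure {G : Type*} [Group G] (hc : 2 ≤ c) (φ : GU c Ry Rx →* G) :
    φ.range = Subgroup.closure {φ (.of 0), φ (.of 1)} := by
  rw [MonoidHom.range_eq_map, ← closure_of_zero_of_one hc, MonoidHom.map_closure, Set.image_pair]

end Generators

variable {c α β : ℕ}

lemma isGUPair_of (hc : 5 ≤ c) :
    IsGUPair c α β (.of 0 : GU c (ryWord c α) (rxWord c β)) (.of 1) := by
  set π := PresentedGroup.mk (rels c (ryWord c α) (rxWord c β))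
  have hrel {w : FreeGroup ℕ} (hw : w ∈ rels c (ryWord c α) (rxWord c β)) : π w = 1 :=
    PresentedGroup.one_of_mem hw
  have hx : π xw = .of 0 := rfl
  have hy : π yw = .of 1 := rfl
  have ht (j : ℕ) (hj : 2 ≤ j) (hjc : j ≤ c) : π (tw j) = tSeq (.of 0) (.of 1) j :=
    of_succ_eq_tSeq hj hjc
  have hs : π s3w = fcomm (tSeq (.of 0) (.of 1) 2) (.of 0) := by
    rw [← ht 2 le_rfl (by omega)]
    exact of_two_eq
  constructor
  · rw [← hs, ← map_pow]
    exact hrel (by simp [rels])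
  · intro j h2 hj
    rw [← ht _ h2 (by omega), ← ht _ (by omega) (by omega), ← ht _ (by omega) (by omega)]
    have h := hrel (w := tw j ^ 3 * (tw (j + 2) ^ 2 * tw (j + 3))⁻¹) (.inl (.inr ⟨j, h2, hj, rfl⟩))
    simpa only [map_mul, map_pow, map_inv, mul_inv_eq_one] using h
  · rw [← ht _ (by omega) (by omega), ← ht _ (by omega) le_rfl]
    have h := hrel (w := tw (c - 2) ^ 3 * (tw c ^ 2)⁻¹) (by simp [rels])
    simpa only [map_mul, map_pow, map_inv, mul_inv_eq_one] using h
  · rw [← hs, ← ht c (by omega) le_rfl, ← hy]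
    have h : π (yw ^ 3 * s3w⁻¹ * (tw c ^ α)⁻¹) = 1 := hrel (w := ryWord c α) (by simp [rels])
    simpa only [map_mul, map_pow, map_inv, mul_inv_eq_iff_eq_mul, one_mul] using h
  · rw [← ht c (by omega) le_rfl, ← ht 5 (by omega) hc, ← ht 4 (by omega) (by omega),
      ← ht 3 (by omega) (by omega), ← hx]
    have h : π (xw ^ 3 * (tw 3)⁻¹ * (tw 4 ^ 2)⁻¹ * (tw 5)⁻¹ * (tw c ^ β)⁻¹) = 1 :=
      hrel (w := rxWord c β) (by simp [rels])
    simpa only [map_mul, map_pow, map_inv, mul_inv_eq_iff_eq_mul, one_mul] using h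

/-- The images of the generators under the homomorphism from `G_U` determined by `(x, y)`. -/
def gens {G : Type*} [Group G] (c : ℕ) (x y : G) : ℕ → G
  | 0 => x
  | 1 => y
  | 2 => fcomm (tSeq x y 2) x
  | j + 3 => if j + 2 ≤ c then tSeq x y (j + 2) else 1

lemma lift_gens_eq_one {G : Type*} [Group G] {x y : G} (hc : 5 ≤ c) (h : IsGUPair c α β x y) :
    ∀ w ∈ rels c (ryWord c α) (rxWord c β), FreeGroup.lift (gens c x y) w = 1 := by
  set f := FreeGroup.lift (gens c x y)
  have hx : f xw = x := FreeGroup.lift_apply_of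
  have hy : f yw = y := FreeGroup.lift_apply_of
  have hs : f s3w = fcomm (tSeq x y 2) x := FreeGroup.lift_apply_of
  have ht (j : ℕ) (hj : 2 ≤ j) (hjc : j ≤ c) : f (tw j) = tSeq x y j := by
    obtain ⟨k, rfl⟩ := Nat.exists_eq_add_of_le' hj
    exact FreeGroup.lift_apply_of.trans (if_pos hjc)
  rintro w ((((rfl | rfl | rfl | rfl | rfl | rfl) | ⟨j, h3, hj, rfl⟩) | ⟨j, h2, hj, rfl⟩) |
    ⟨n, hn, rfl⟩)
  · rw [map_mul, map_inv, map_fcomm, mul_inv_eq_one, ht 2 le_rfl (by omega), hx, hy, tSeq]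
  · rw [map_mul, map_inv, map_fcomm, mul_inv_eq_one, ht 2 le_rfl (by omega), hx, hs]
  · rw [map_pow, hs, h.s_cube]
  · rw [map_mul, map_inv, map_pow, map_pow, mul_inv_eq_one, ht _ (by omega) (by omega),
      ht _ (by omega) le_rfl, h.t_cube_last]
  · simp only [ryWord, map_mul, map_pow, map_inv, mul_inv_eq_iff_eq_mul, one_mul]
    rw [hy, hs, ht c (by omega) le_rfl, h.y_cube]
  · simp only [rxWord, map_mul, map_pow, map_inv, mul_inv_eq_iff_eq_mul, one_mul]
    rw [hx, h.x_cube, ht c (by omega) le_rfl, ht 5 (by omega) hc, ht 4 (by omega) (by omega),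
      ht 3 (by omega) (by omega)]
  · obtain ⟨i, rfl⟩ := Nat.exists_eq_add_of_le' (show 1 ≤ j by omega)
    rw [map_mul, map_inv, map_fcomm, mul_inv_eq_one, Nat.add_sub_cancel, hy,
      ht _ (by omega) hj, ht _ (by omega) (by omega), tSeq_succ _ _ (by omega)]
  · rw [map_mul, map_inv, map_mul, map_pow, map_pow, mul_inv_eq_one, ht _ h2 (by omega),
      ht _ (by omega) (by omega), ht _ (by omega) (by omega), h.t_cube j h2 hj]
  · obtain ⟨k, rfl⟩ := Nat.exists_eq_add_of_le' (show 3 ≤ n by omega)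
    exact FreeGroup.lift_apply_of.trans (if_neg (by omega))

lemma exists_hom_of_isGUPair {G : Type*} [Group G] {x y : G} (hc : 5 ≤ c)
    (h : IsGUPair c α β x y) :
    ∃ φ : GU c (ryWord c α) (rxWord c β) →* G, φ (.of 0) = x ∧ φ (.of 1) = y :=
  ⟨PresentedGroup.toGroup (lift_gens_eq_one hc h), PresentedGroup.toGroup.of _,
    PresentedGroup.toGroup.of _⟩

end GUdef

open QuadraticAlgebra DualNumber

/-- A quotient of `ℤ₃[ζ₃]` in which the uniformizer `p` has nilpotency index exactly `c` and
satisfies the Eisenstein equation perturbed by `b * p ^ (c - 1)`, together with its reduction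
modulo `p²`. -/
structure EisensteinFrame (R : Type*) [CommRing R] (c b : ℕ) where
  /-- The uniformizer. -/
  p : R
  /-- Reduction modulo `p²`, written `u₀ + u₁ ε`. -/
  res : R →+* DualNumber (ZMod 3)
  res_p : res p = ε
  five_le : 5 ≤ c
  pow_eq_zero : p ^ c = 0
  eisenstein : 3 + 3 * p + p ^ 2 + b * p ^ (c - 1) = 0
  top_ne_zero : p ^ (c - 1) ≠ 0
  dvd_of_fst_res : ∀ u, (res u).fst = 0 → p ∣ u

/-- The ring `ℤ[ζ₃]`, presented by `ω = ζ₃ - 1`, a root of `X² + 3X + 3`. -/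
abbrev EisensteinInt : Type := QuadraticAlgebra ℤ (-3) (-3)

namespace EisensteinInt

lemma omega_quadratic : 3 + 3 * (ω : EisensteinInt) + ω ^ 2 = 0 := by
  rw [sq, omega_mul_omega_eq_mk]
  ext <;> simp

lemma three_eq_omega_mul : (3 : EisensteinInt) = ω * -(3 + ω) := by
  linear_combination omega_quadratic

lemma isLeftRegular_omega : IsLeftRegular (ω : EisensteinInt) := by
  intro z w (h : ω * z = ω * w)
  have h3 : (3 : ℤ) • z = (3 : ℤ) • w := by
    simp only [zsmul_eq_mul, Int.cast_ofNat]
    linear_combination (z - w) * three_eq_omega_mul - (3 + ω) * h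
  simpa only [QuadraticAlgebra.ext_iff, re_smul, im_smul, smul_eq_mul, mul_eq_mul_left_iff,
    OfNat.ofNat_ne_zero, or_false] using h3

lemma omega_dvd_of_three_dvd_re {z : EisensteinInt} (hz : 3 ∣ z.re) : ω ∣ z := by
  obtain ⟨k, hk⟩ := hz
  have h : z = 3 * (k : EisensteinInt) + ω * (z.im : EisensteinInt) := by ext <;> simp [hk]
  rw [h, three_eq_omega_mul, mul_assoc, ← mul_add]
  exact dvd_mul_right _ _

lemma dualNumber_three_eq_zero : (3 : DualNumber (ZMod 3)) = 0 := by
  ext <;> rfl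

/-- Reduction modulo `3 = -ω(ω + 3)`, which identifies `ℤ[ζ₃]/(3)` with `𝔽₃[ε]`. -/
noncomputable def dualReduction : EisensteinInt →+* DualNumber (ZMod 3) :=
  (QuadraticAlgebra.lift (R := ℤ) (a := -3) (b := -3) ⟨(ε : DualNumber (ZMod 3)), by
    simp [dualNumber_three_eq_zero]⟩).toRingHom

lemma dualReduction_apply (z : EisensteinInt) :
    dualReduction z = z.re • (1 : DualNumber (ZMod 3)) + z.im • ε := rfl

lemma dualReduction_omega : dualReduction ω = ε := by
  simp [dualReduction_apply]

lemma dualReduction_omega_pow {n : ℕ} (hn : 2 ≤ n) : dualReduction (ω ^ n) = 0 := by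
  rw [map_pow, dualReduction_omega]
  exact pow_eq_zero_of_le hn eps_pow_two

lemma not_omega_pow_succ_dvd (n : ℕ) : ¬ (ω : EisensteinInt) ^ (n + 1) ∣ ω ^ n := by
  rintro ⟨z, hz⟩
  have h : 1 = ω * z := (isLeftRegular_omega.pow n) (by linear_combination hz)
  simpa [dualReduction_omega] using congrArg (fun w => (dualReduction w).fst) h

/-- The element `ω + b ω ^ (n + 3)`, which solves the perturbed Eisenstein equation
`3 + 3p + p² = -b p ^ (n + 4)` modulo `ω ^ (n + 5)`. -/
def perturbed (n b : ℕ) : EisensteinInt := ω * (1 + (b : EisensteinInt) * ω ^ (n + 2))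

lemma dvd_perturbed_pow_sub (n b m : ℕ) :
    (ω : EisensteinInt) ^ (m + 1) ∣ perturbed n b ^ m - ω ^ m := by
  obtain ⟨w, hw⟩ : (ω : EisensteinInt) ∣ (1 + (b : EisensteinInt) * ω ^ (n + 2)) ^ m - 1 ^ m :=
    dvd_trans ⟨(b : EisensteinInt) * ω ^ (n + 1), by ring⟩ (sub_dvd_pow_sub_pow _ _ _)
  refine ⟨w, ?_⟩
  rw [perturbed, mul_pow]
  linear_combination ω ^ m * hw

lemma dvd_perturbed_eisenstein (n b : ℕ) : (ω : EisensteinInt) ^ (n + 5) ∣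
    3 + 3 * perturbed n b + perturbed n b ^ 2 + b * perturbed n b ^ (n + 4) := by
  obtain ⟨w, hw⟩ := dvd_perturbed_pow_sub n b (n + 4)
  refine ⟨(b : EisensteinInt) * (w - 1) + (b : EisensteinInt) ^ 2 * ω ^ (n + 1), ?_⟩
  rw [perturbed] at hw ⊢
  linear_combination
    (1 + (b : EisensteinInt) * ω ^ (n + 3)) * omega_quadratic + (b : EisensteinInt) * hw

/-- The ring `ℤ[ζ₃] / (ω ^ (n + 5))` with the uniformizer `ω + b ω ^ (n + 3)`. -/
noncomputable def frame (n b : ℕ) :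
    EisensteinFrame (EisensteinInt ⧸ Ideal.span {(ω : EisensteinInt) ^ (n + 5)}) (n + 5) b where
  p := Ideal.Quotient.mk _ (perturbed n b)
  res := Ideal.Quotient.lift _ dualReduction fun z hz => by
    obtain ⟨w, rfl⟩ := Ideal.mem_span_singleton.1 hz
    rw [map_mul, dualReduction_omega_pow (by omega), zero_mul]
  res_p := by
    rw [Ideal.Quotient.lift_mk, perturbed, map_mul, map_add, map_mul,
      dualReduction_omega_pow (by omega), dualReduction_omega]
    simp
  five_le := by omega
  pow_eq_zero := by
    rw [← map_pow, Ideal.Quotient.eq_zero_iff_dvd, perturbed, mul_pow]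
    exact dvd_mul_right _ _
  eisenstein := by
    have h := (Ideal.Quotient.eq_zero_iff_dvd _ _).2 (dvd_perturbed_eisenstein n b)
    simpa only [map_add, map_mul, map_pow, map_natCast, map_ofNat,
      Nat.add_succ_sub_one] using h
  top_ne_zero := by
    rw [← map_pow, Ne, Ideal.Quotient.eq_zero_iff_dvd]
    intro h
    exact not_omega_pow_succ_dvd (n + 4)
      ((dvd_sub_right h).1 (dvd_perturbed_pow_sub n b (n + 4)))
  dvd_of_fst_res u hu := by
    obtain ⟨z, rfl⟩ := Ideal.Quotient.mk_surjective u
    have hre : ((z.re : ℤ) : ZMod 3) = 0 := by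
      simpa [dualReduction_apply] using hu
    have hunit : IsUnit (Ideal.Quotient.mk (Ideal.span {(ω : EisensteinInt) ^ (n + 5)})
        (1 + (b : EisensteinInt) * ω ^ (n + 2))) := by
      rw [map_add, map_one]
      refine IsNilpotent.isUnit_one_add ⟨n + 5, ?_⟩
      rw [← map_pow, Ideal.Quotient.eq_zero_iff_dvd]
      exact pow_dvd_pow_of_dvd ⟨(b : EisensteinInt) * ω ^ (n + 1), by ring⟩ _
    rw [perturbed, map_mul]
    exact hunit.mul_right_dvd.2
      (map_dvd _ (omega_dvd_of_three_dvd_re ((ZMod.intCast_zmod_eq_zero_iff_dvd _ 3).1 hre)))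

end EisensteinInt

lemma eq_one_or_eq_neg_one_of_ne_zero {k : ZMod 3} (hk : k ≠ 0) : k = 1 ∨ k = -1 := by
  decide +revert

/-- The inclusion `ℤ/3 → ℤ/9`, multiplication by `3`. -/
def threeMul : ZMod 3 →+ ZMod 9 :=
  ZMod.lift 3 ⟨(zmultiplesHom (ZMod 9)) 3, by decide⟩

lemma threeMul_injective : Function.Injective threeMul := by
  decide

/-- Reduction `ℤ/9 → ℤ/3`. -/
def modThree : ZMod 9 →+* ZMod 3 := ZMod.castHom (by norm_num) (ZMod 3)

@[simp] lemma modThree_threeMul (k : ZMod 3) : modThree (threeMul k) = 0 := by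
  decide +revert

lemma exists_eq_threeMul {r : ZMod 9} (hr : modThree r = 0) : ∃ k, r = threeMul k := by
  decide +revert

lemma three_mul_eq_threeMul (r : ZMod 9) : 3 * r = threeMul (modThree r) := by
  decide +revert

namespace EisensteinFrame

variable {R : Type*} [CommRing R] {c b : ℕ} (F : EisensteinFrame R c b)

/-- The residue of `u` modulo `p`. -/
def coeff₀ : R →+* ZMod 3 := (TrivSqZeroExt.fstHom ℤ (ZMod 3) (ZMod 3)).toRingHom.comp F.res

/-- The coefficient of `p` in `u` modulo `p²`. -/
def coeff₁ : R →+ ZMod 3 := (TrivSqZeroExt.sndHom (ZMod 3) (ZMod 3)).toAddMonoidHom.comp F.res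

lemma coeff₁_mul (u v : R) :
    F.coeff₁ (u * v) = F.coeff₀ u * F.coeff₁ v + F.coeff₁ u * F.coeff₀ v := by
  change (F.res (u * v)).snd = (F.res u).fst * (F.res v).snd + (F.res u).snd * (F.res v).fst
  rw [map_mul, DualNumber.snd_mul]

@[simp] lemma coeff₁_one : F.coeff₁ 1 = 0 := by
  change (F.res 1).snd = 0
  rw [map_one, TrivSqZeroExt.snd_one]

@[simp] lemma coeff₀_p : F.coeff₀ F.p = 0 := by
  change (F.res F.p).fst = 0
  rw [F.res_p, DualNumber.fst_eps]

@[simp] lemma coeff₁_p : F.coeff₁ F.p = 1 := by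
  change (F.res F.p).snd = 1
  rw [F.res_p, DualNumber.snd_eps]

lemma exists_eq_p_mul {u : R} (hu : F.coeff₀ u = 0) :
    ∃ w, u = F.p * w ∧ F.coeff₀ w = F.coeff₁ u := by
  obtain ⟨w, rfl⟩ := F.dvd_of_fst_res u hu
  exact ⟨w, rfl, by simp [coeff₁_mul]⟩

lemma top_mul_p : F.p ^ (c - 1) * F.p = 0 := by
  rw [← pow_succ]
  exact pow_eq_zero_of_le (by omega) F.pow_eq_zero

lemma three_mul_p_pow : 3 * F.p ^ (c - 1) = 0 := by
  have h5 := F.five_le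
  have h2 : F.p ^ (c - 1) * F.p ^ (c - 1) = 0 := by
    rw [← pow_add]
    exact pow_eq_zero_of_le (by omega) F.pow_eq_zero
  linear_combination F.p ^ (c - 1) * F.eisenstein - (3 + F.p) * F.top_mul_p - (b : R) * h2

/-- The parametrization `k ↦ k p ^ (c - 1)` of the annihilator of `p`. -/
def top : ZMod 3 →+ R :=
  ZMod.lift 3 ⟨(zmultiplesHom R) (F.p ^ (c - 1)), by simpa using F.three_mul_p_pow⟩

lemma top_natCast (n : ℕ) : F.top (n : ZMod 3) = n * F.p ^ (c - 1) := by
  have := ZMod.lift_coe 3 ⟨(zmultiplesHom R) (F.p ^ (c - 1)), by simpa using F.three_mul_p_pow⟩ n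
  simpa [top] using this

lemma p_pow_mul (u : R) : F.p ^ (c - 1) * u = F.top (F.coeff₀ u) := by
  obtain ⟨w, hw, -⟩ := F.exists_eq_p_mul (u := u - ((F.coeff₀ u).val : R)) (by simp)
  have htop := F.top_natCast (F.coeff₀ u).val
  rw [ZMod.natCast_zmod_val] at htop
  rw [htop]
  linear_combination F.p ^ (c - 1) * hw + w * F.top_mul_p

lemma top_mul_right (k : ZMod 3) (u : R) : F.top k * u = F.top (k * F.coeff₀ u) := by
  rw [← ZMod.natCast_zmod_val k, F.top_natCast, mul_assoc, F.p_pow_mul,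
    ← nsmul_eq_mul, ← nsmul_eq_mul, map_nsmul]

lemma top_injective : Function.Injective F.top := by
  have h1 : F.top 1 ≠ 0 := by
    rw [← Nat.cast_one, top_natCast, Nat.cast_one, one_mul]
    exact F.top_ne_zero
  rw [injective_iff_map_eq_zero]
  intro k hk
  by_contra hk0
  obtain rfl | rfl := eq_one_or_eq_neg_one_of_ne_zero hk0
  · exact h1 hk
  · exact h1 (by rw [← neg_eq_zero, ← map_neg, hk])

lemma coeff₀_eq_zero_of_p_pow_mul {n : ℕ} (hn : n < c) {u : R} (h : F.p ^ n * u = 0) :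
    F.coeff₀ u = 0 := by
  apply F.top_injective
  rw [map_zero, ← F.p_pow_mul, show c - 1 = (c - 1 - n) + n by omega, pow_add, mul_assoc, h,
    mul_zero]

lemma coeff_eq_zero_of_dvd {u : R} (hu : F.p ^ 2 ∣ u) : F.coeff₀ u = 0 ∧ F.coeff₁ u = 0 := by
  obtain ⟨w, rfl⟩ := hu
  simp [coeff₁_mul, sq]

lemma p_sq_dvd_top (k : ZMod 3) : F.p ^ 2 ∣ F.top k := by
  have h5 := F.five_le
  rw [← ZMod.natCast_zmod_val k, top_natCast]
  exact dvd_mul_of_dvd_right (pow_dvd_pow _ (by omega)) _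

@[simp] lemma coeff₀_top (k : ZMod 3) : F.coeff₀ (F.top k) = 0 :=
  (F.coeff_eq_zero_of_dvd (F.p_sq_dvd_top k)).1

@[simp] lemma coeff₁_top (k : ZMod 3) : F.coeff₁ (F.top k) = 0 :=
  (F.coeff_eq_zero_of_dvd (F.p_sq_dvd_top k)).2

lemma one_add_p_pow_three : (1 + F.p) ^ 3 = 1 := by
  linear_combination F.p * F.eisenstein - b * F.top_mul_p

/-- The power `ζ ^ r` of the cube root of unity `ζ = 1 + p`. -/
def root (r : ZMod 9) : R := (1 + F.p) ^ r.val

lemma root_add (r s : ZMod 9) : F.root (r + s) = F.root r * F.root s := by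
  have h9 : (1 + F.p) ^ 9 = 1 := by
    rw [show 9 = 3 * 3 from rfl, pow_mul, F.one_add_p_pow_three, one_pow]
  rw [root, root, root, ZMod.val_add, ← pow_add, ← pow_eq_pow_mod _ h9]

@[simp] lemma root_zero : F.root 0 = 1 := pow_zero _

lemma root_pow_three (r : ZMod 9) : F.root r ^ 3 = 1 := by
  rw [root, ← pow_mul, mul_comm, pow_mul, one_add_p_pow_three, one_pow]

@[simp] lemma coeff₀_root (r : ZMod 9) : F.coeff₀ (F.root r) = 1 := by simp [root]

@[simp] lemma coeff₁_root (r : ZMod 9) : F.coeff₁ (F.root r) = modThree r := by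
  have h (n : ℕ) : F.coeff₁ ((1 + F.p) ^ n) = n := by
    induction n with
    | zero => simp
    | succ n ih => rw [pow_succ, coeff₁_mul, ih]; simp [add_comm]
  rw [root, h, ← map_natCast modThree, ZMod.natCast_zmod_val]

lemma root_eq_pow (r : ZMod 9) : F.root r = (1 + F.p) ^ (modThree r).val := by
  rw [root, pow_eq_pow_mod _ F.one_add_p_pow_three]
  congr 1

@[simp] lemma root_threeMul (k : ZMod 3) : F.root (threeMul k) = 1 := by
  rw [root_eq_pow, modThree_threeMul, ZMod.val_zero, pow_zero]

lemma one_add_root_add_sq_mul {q : ZMod 9} (hq : modThree q ≠ 0) (u : R) :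
    (1 + F.root q + F.root q ^ 2) * u = -F.top (b * F.coeff₀ u) := by
  rw [← nsmul_eq_mul, map_nsmul, nsmul_eq_mul, ← p_pow_mul, ← mul_assoc, ← neg_mul]
  congr 1
  have h1 : 1 + (1 + F.p) + (1 + F.p) ^ 2 = -(b * F.p ^ (c - 1)) := by
    linear_combination F.eisenstein
  rw [root_eq_pow]
  obtain h | h := eq_one_or_eq_neg_one_of_ne_zero hq
  · rw [h, show (1 : ZMod 3).val = 1 from rfl, pow_one, h1]
  · rw [h, show (-1 : ZMod 3).val = 2 from rfl]
    linear_combination h1 + (1 + F.p) * F.one_add_p_pow_three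

/-- The difference `ζ ^ r - 1`, which is a uniformizer when `3 ∤ r`. -/
def rootSubOne (r : ZMod 9) : R := F.root r - 1

@[simp] lemma coeff₀_rootSubOne (r : ZMod 9) : F.coeff₀ (F.rootSubOne r) = 0 := by
  simp [rootSubOne]

@[simp] lemma coeff₁_rootSubOne (r : ZMod 9) : F.coeff₁ (F.rootSubOne r) = modThree r := by
  simp [rootSubOne]

@[simp] lemma rootSubOne_threeMul (k : ZMod 3) : F.rootSubOne (threeMul k) = 0 := by
  simp [rootSubOne]

lemma three_mul_rootSubOne_pow (r : ZMod 9) {n : ℕ} (hn : 1 ≤ n) :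
    3 * F.rootSubOne r ^ n = 2 * F.rootSubOne r ^ (n + 2) + F.rootSubOne r ^ (n + 3) := by
  obtain ⟨m, rfl⟩ := Nat.exists_eq_add_of_le' hn
  have h : F.rootSubOne r * (3 + 3 * F.rootSubOne r + F.rootSubOne r ^ 2) = 0 := by
    rw [rootSubOne]
    linear_combination F.root_pow_three r
  linear_combination F.rootSubOne r ^ m * (1 - F.rootSubOne r) * h

lemma three_add_rootSubOne_pow_mul {q : ZMod 9} (hq : modThree q ≠ 0) (u : R) :
    (3 + F.rootSubOne q ^ 2 + 2 * F.rootSubOne q ^ 3 + F.rootSubOne q ^ 4) * u =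
      -F.top (b * F.coeff₀ u) := by
  rw [← F.one_add_root_add_sq_mul hq, rootSubOne]
  linear_combination (F.root q - 2) * u * F.root_pow_three q

lemma rootSubOne_pow_mul (r : ZMod 9) (u : R) :
    F.rootSubOne r ^ (c - 1) * u = F.top (modThree r ^ (c - 1) * F.coeff₀ u) := by
  obtain ⟨w, hw, hw0⟩ := F.exists_eq_p_mul (F.coeff₀_rootSubOne r)
  rw [hw, mul_pow, mul_assoc, p_pow_mul, map_mul, map_pow, hw0, coeff₁_rootSubOne]

lemma rootSubOne_pow_eq_zero (r : ZMod 9) : F.rootSubOne r ^ c = 0 := by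
  obtain ⟨w, hw, -⟩ := F.exists_eq_p_mul (F.coeff₀_rootSubOne r)
  rw [hw, mul_pow, F.pow_eq_zero, zero_mul]

lemma p_sq_dvd_rootSubOne_pow_mul (r : ZMod 9) {n : ℕ} (hn : 2 ≤ n) (u : R) :
    F.p ^ 2 ∣ F.rootSubOne r ^ n * u := by
  obtain ⟨w, hw, -⟩ := F.exists_eq_p_mul (F.coeff₀_rootSubOne r)
  rw [hw, mul_pow, mul_assoc]
  exact dvd_mul_of_dvd_left (pow_dvd_pow _ hn) _

/-- The alternating form `u₁v₀ - u₀v₁` on `R / p²`. -/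
def form (u v : R) : ZMod 3 := F.coeff₁ u * F.coeff₀ v - F.coeff₀ u * F.coeff₁ v

lemma form_eq_zero_of_dvd (u : R) {v : R} (hv : F.p ^ 2 ∣ v) : F.form u v = 0 := by
  simp [form, F.coeff_eq_zero_of_dvd hv]

end EisensteinFrame

/-- The model group of order `3 ^ (c + 2)`, on pairs `(u, r)` in `R × ℤ/9`: the product of `(u, r)`
and `(v, s)` is their product `(ζ ^ s u + v, r + s)` in the semidirect product `ℤ/9 ⋉ R`, times the
central element `central k = (a k p ^ (c - 1), 3 k)` with `k = form (ζ ^ s u) v`. -/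
@[ext] structure FrameGroup {R : Type*} [CommRing R] {c b : ℕ} (F : EisensteinFrame R c b)
    (a : ZMod 3) where
  /-- The component in the ring. -/
  fst : R
  /-- The exponent of the complement `ℤ/9`. -/
  snd : ZMod 9

namespace FrameGroup

open EisensteinFrame

variable {R : Type*} [CommRing R] {c b : ℕ} {F : EisensteinFrame R c b} {a : ZMod 3}

instance : Mul (FrameGroup F a) where
  mul g h :=
    ⟨F.root h.snd * g.fst + h.fst + F.top (a * F.form (F.root h.snd * g.fst) h.fst),
      g.snd + h.snd + threeMul (F.form (F.root h.snd * g.fst) h.fst)⟩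

instance : One (FrameGroup F a) := ⟨⟨0, 0⟩⟩

instance : Inv (FrameGroup F a) := ⟨fun g => ⟨-(F.root (-g.snd) * g.fst), -g.snd⟩⟩

lemma mk_mul_mk (u v : R) (r s : ZMod 9) : (⟨u, r⟩ : FrameGroup F a) * ⟨v, s⟩ =
    ⟨F.root s * u + v + F.top (a * F.form (F.root s * u) v),
      r + s + threeMul (F.form (F.root s * u) v)⟩ := rfl

lemma one_def : (1 : FrameGroup F a) = ⟨0, 0⟩ := rfl

lemma inv_mk (u : R) (r : ZMod 9) : (⟨u, r⟩ : FrameGroup F a)⁻¹ = ⟨-(F.root (-r) * u), -r⟩ := rfl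

lemma form_cocycle (r s : ZMod 9) (u v w : R) (k l : ZMod 3) :
    F.form (F.root r * u) v + F.form (F.root s * (F.root r * u + v + F.top k)) w =
      F.form (F.root s * v) w + F.form (F.root r * F.root s * u) (F.root s * v + w + F.top l) := by
  simp only [form, coeff₁_mul, map_add, map_mul, coeff₀_root, coeff₀_top, coeff₁_top]
  ring

lemma mul_assoc' (g h k : FrameGroup F a) : g * h * k = g * (h * k) := by
  obtain ⟨u, r⟩ := g
  obtain ⟨v, s⟩ := h
  obtain ⟨w, t⟩ := k
  simp only [mk_mul_mk, root_add, root_threeMul, mul_one]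
  ext
  · have htop (l : ZMod 3) : F.root t * F.top l = F.top l := by
      rw [mul_comm, top_mul_right, coeff₀_root, mul_one]
    have h := congrArg (fun l => F.top (a * l)) (form_cocycle (F := F) s t u v w
      (a * F.form (F.root s * u) v) (a * F.form (F.root t * v) w))
    simp only [mul_add, map_add, htop] at h ⊢
    linear_combination h
  · have h := congrArg threeMul (form_cocycle (F := F) s t u v w
      (a * F.form (F.root s * u) v) (a * F.form (F.root t * v) w))
    simp only [map_add] at h ⊢
    linear_combination h

instance : Group (FrameGroup F a) :=
  Group.ofLeftAxioms mul_assoc'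
    (by
      rintro ⟨u, r⟩
      ext <;> simp [one_def, mk_mul_mk, form])
    (by
      rintro ⟨u, r⟩
      have hroot : F.root r * F.root (-r) = 1 := by rw [← root_add, add_neg_cancel, root_zero]
      have hu : F.root r * -(F.root (-r) * u) = -u := by linear_combination -u * hroot
      have hform : F.form (-u) u = 0 := by simp only [form, map_neg]; ring
      rw [inv_mk, mk_mul_mk, hu, hform]
      simp [one_def])

lemma mk_mul_mk_of_dvd {u v : R} {r s : ZMod 9} (hv : F.p ^ 2 ∣ v) (hs : F.root s = 1) :
    (⟨u, r⟩ : FrameGroup F a) * ⟨v, s⟩ = ⟨u + v, r + s⟩ := by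
  simp [mk_mul_mk, hs, F.form_eq_zero_of_dvd _ hv]

lemma mk_threeMul_pow (u : R) (k : ZMod 3) (n : ℕ) :
    (⟨u, threeMul k⟩ : FrameGroup F a) ^ n = ⟨n * u, threeMul (n * k)⟩ := by
  induction n with
  | zero => simp [one_def]
  | succ n ih =>
    have hform : F.form (n * u) u = 0 := by
      rw [← nsmul_eq_mul, form, map_nsmul, map_nsmul, nsmul_eq_mul, nsmul_eq_mul]
      ring
    rw [pow_succ, ih, mk_mul_mk, root_threeMul, one_mul, hform, mul_zero, map_zero, map_zero,
      add_zero, add_zero, ← map_add, Nat.cast_succ, Nat.cast_succ, add_one_mul, add_one_mul]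

lemma mk_zero_pow (u : R) (n : ℕ) : (⟨u, 0⟩ : FrameGroup F a) ^ n = ⟨n * u, 0⟩ := by
  simpa using mk_threeMul_pow u 0 n

lemma mk_threeMul_pow_three (u : R) (k : ZMod 3) :
    (⟨u, threeMul k⟩ : FrameGroup F a) ^ 3 = ⟨3 * u, 0⟩ := by
  rw [mk_threeMul_pow, Nat.cast_ofNat, Nat.cast_ofNat, show (3 : ZMod 3) = 0 from rfl, zero_mul,
    map_zero]

/-- The central elements through which the commutators of elements of `R` are expressed. -/
def central (k : ZMod 3) : FrameGroup F a := ⟨F.top (a * k), threeMul k⟩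

@[simp] lemma central_zero : (central 0 : FrameGroup F a) = 1 := by simp [central, one_def]

lemma mk_mul_central (u : R) (r : ZMod 9) (k : ZMod 3) :
    (⟨u, r⟩ : FrameGroup F a) * central k = ⟨u + F.top (a * k), r + threeMul k⟩ :=
  mk_mul_mk_of_dvd (F.p_sq_dvd_top _) (F.root_threeMul k)

lemma central_mem_center (k : ZMod 3) : (central k : FrameGroup F a) ∈ Subgroup.center _ := by
  rw [Subgroup.mem_center_iff]
  rintro ⟨u, r⟩
  rw [mk_mul_central, central, mk_mul_mk, mul_comm (F.root r), top_mul_right]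
  simp [form, add_comm]

lemma mk_mul_central_pow_three (u : R) (k : ZMod 3) :
    ((⟨u, 0⟩ : FrameGroup F a) * central k) ^ 3 = ⟨3 * u, 0⟩ := by
  rw [mk_mul_central, zero_add, mk_threeMul_pow_three, mul_add, mul_comm 3 (F.top _),
    top_mul_right, show F.coeff₀ 3 = 0 from map_ofNat _ 3, mul_zero, map_zero, add_zero]

lemma central_pow_three (k : ZMod 3) : (central k : FrameGroup F a) ^ 3 = 1 := by
  have h := mk_mul_central_pow_three (F := F) (a := a) 0 k
  rwa [mul_zero, ← one_def, one_mul] at h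

lemma fcomm_mk_mk (u v : R) (r s : ZMod 9) {d : R}
    (hd : d = F.rootSubOne s * u - F.rootSubOne r * v) :
    fcomm (⟨u, r⟩ : FrameGroup F a) ⟨v, s⟩ = ⟨d, 0⟩ * central
      (F.form (F.root s * u) v - F.form (F.root r * v) u - F.form (F.root r * v + u) d) := by
  apply fcomm_eq_of_mul_eq
  rw [← mul_assoc, mk_mul_mk v u, mk_mul_mk u v, mk_mul_mk _ d, mk_mul_central]
  have hform (l : ZMod 3) :
      F.form (F.root r * v + u + F.top l) d = F.form (F.root r * v + u) d := by
    simp [form]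
  simp only [root_zero, one_mul, hform, mul_sub, map_sub, add_zero]
  ext
  · rw [hd, rootSubOne, rootSubOne]; ring
  · ring

lemma fcomm_mk_zero {u : R} (hu : F.coeff₀ u = 0) (v : R) (s : ZMod 9) :
    fcomm (⟨u, 0⟩ : FrameGroup F a) ⟨v, s⟩ =
      ⟨F.rootSubOne s * u, 0⟩ * central (-(F.coeff₁ u * F.coeff₀ v)) := by
  rw [fcomm_mk_mk u v 0 s (d := F.rootSubOne s * u) (by simp [rootSubOne])]
  congr 2
  have h3 : (3 : ZMod 3) = 0 := rfl
  simp only [form, coeff₁_mul, map_add, map_mul, coeff₀_root, root_zero, one_mul, hu,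
    coeff₀_rootSubOne, mul_zero, zero_mul, add_zero, sub_zero]
  linear_combination F.coeff₁ u * F.coeff₀ v * h3

/-- The linear combinations `m r + n u₀` of the coordinates of `(u, r)` modulo the Frattini
subgroup. -/
def linearHom (m n : ZMod 3) : FrameGroup F a →* Multiplicative (ZMod 3) where
  toFun g := .ofAdd (m * modThree g.snd + n * F.coeff₀ g.fst)
  map_one' := by simp [one_def]
  map_mul' := by
    rintro ⟨u, r⟩ ⟨v, s⟩
    rw [mk_mul_mk, ← ofAdd_add]
    congr 1
    simp only [map_add, map_mul, coeff₀_root, coeff₀_top, modThree_threeMul]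
    ring

lemma det_ne_zero_of_mem_closure {u v : R} {r q : ZMod 9}
    (hx : (⟨1, 0⟩ : FrameGroup F a) ∈ Subgroup.closure {⟨u, r⟩, ⟨v, q⟩})
    (hy : (⟨0, 1⟩ : FrameGroup F a) ∈ Subgroup.closure {⟨u, r⟩, ⟨v, q⟩}) :
    modThree r * F.coeff₀ v - modThree q * F.coeff₀ u ≠ 0 := by
  intro hdet
  obtain ⟨w, hw, hmul⟩ := (Matrix.exists_vecMul_eq_zero_iff
    (M := !![modThree r, modThree q; F.coeff₀ u, F.coeff₀ v])).2 (by
      rw [Matrix.det_fin_two_of, hdet])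
  have hr : w 0 * modThree r + w 1 * F.coeff₀ u = 0 := by
    simpa [Matrix.vecMul, dotProduct] using congrFun hmul 0
  have hq : w 0 * modThree q + w 1 * F.coeff₀ v = 0 := by
    simpa [Matrix.vecMul, dotProduct] using congrFun hmul 1
  have hle : Subgroup.closure {⟨u, r⟩, ⟨v, q⟩} ≤ (linearHom (F := F) (a := a) (w 0) (w 1)).ker := by
    rw [Subgroup.closure_le, Set.pair_subset_iff]
    exact ⟨congrArg Multiplicative.ofAdd hr, congrArg Multiplicative.ofAdd hq⟩
  have h1 : w 1 = 0 := by simpa [linearHom] using hle hx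
  have h0 : w 0 = 0 := by simpa [linearHom] using hle hy
  exact hw (by ext i; fin_cases i <;> assumption)

section Sequence

variable {u v : R} {ρ : ZMod 3} {q : ZMod 9}

lemma exists_tSeq_eq_mul_central {j : ℕ} (hj : 2 ≤ j) :
    ∃ k, tSeq (⟨u, threeMul ρ⟩ : FrameGroup F a) ⟨v, q⟩ j =
      ⟨-(F.rootSubOne q ^ (j - 1) * u), 0⟩ * central k := by
  induction j, hj using Nat.le_induction with
  | base => exact ⟨_, fcomm_mk_mk v u q (threeMul ρ) (by simp)⟩
  | succ j hj ih =>
    obtain ⟨k, hk⟩ := ih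
    rw [tSeq_succ _ _ hj, hk, fcomm_mul_left_of_mem_center (central_mem_center k),
      fcomm_mk_zero (by simp [show j - 1 ≠ 0 by omega])]
    refine ⟨_, congrArg (⟨·, 0⟩ * central _) ?_⟩
    rw [Nat.add_sub_cancel, show j = j - 1 + 1 by omega, pow_succ', Nat.add_sub_cancel]
    ring

lemma tSeq_three_eq : tSeq (⟨u, threeMul ρ⟩ : FrameGroup F a) ⟨v, q⟩ 3 =
    ⟨-(F.rootSubOne q ^ 2 * u), 0⟩ * central (modThree q * F.coeff₀ u * F.coeff₀ v) := by
  obtain ⟨k, hk⟩ := exists_tSeq_eq_mul_central (F := F) (a := a) (u := u) (v := v) (ρ := ρ)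
    (q := q) le_rfl
  rw [tSeq_succ _ _ le_rfl, hk, fcomm_mul_left_of_mem_center (central_mem_center k),
    fcomm_mk_zero (by simp)]
  congr 2
  · ring
  · simp [coeff₁_mul]

lemma tSeq_eq_of_four_le {j : ℕ} (hj : 4 ≤ j) :
    tSeq (⟨u, threeMul ρ⟩ : FrameGroup F a) ⟨v, q⟩ j = ⟨-(F.rootSubOne q ^ (j - 1) * u), 0⟩ := by
  obtain ⟨i, rfl⟩ := Nat.exists_eq_add_of_le' (show 1 ≤ j by omega)
  obtain ⟨k, hk⟩ := exists_tSeq_eq_mul_central (F := F) (a := a) (u := u) (v := v) (ρ := ρ)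
    (q := q) (j := i) (by omega)
  obtain ⟨h₀, h₁⟩ := F.coeff_eq_zero_of_dvd
    (F.p_sq_dvd_rootSubOne_pow_mul q (n := i - 1) (by omega) u)
  rw [tSeq_succ _ _ (by omega), hk, fcomm_mul_left_of_mem_center (central_mem_center k),
    fcomm_mk_zero (by rw [map_neg, h₀, neg_zero]), map_neg, h₁, neg_zero, zero_mul, neg_zero,
    central_zero, mul_one]
  congr 1
  rw [Nat.add_sub_cancel, show i = i - 1 + 1 by omega, pow_succ', Nat.add_sub_cancel]
  ring

lemma tSeq_pow_three {j : ℕ} (hj : 2 ≤ j) :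
    tSeq (⟨u, threeMul ρ⟩ : FrameGroup F a) ⟨v, q⟩ j ^ 3 =
      ⟨-(3 * F.rootSubOne q ^ (j - 1) * u), 0⟩ := by
  obtain ⟨k, hk⟩ := exists_tSeq_eq_mul_central (F := F) (a := a) (u := u) (v := v) (ρ := ρ)
    (q := q) hj
  rw [hk, mk_mul_central_pow_three]
  congr 1
  ring

lemma tSeq_cube_eq {j : ℕ} (hj : 2 ≤ j) :
    tSeq (⟨u, threeMul ρ⟩ : FrameGroup F a) ⟨v, q⟩ j ^ 3 =
      tSeq ⟨u, threeMul ρ⟩ ⟨v, q⟩ (j + 2) ^ 2 * tSeq ⟨u, threeMul ρ⟩ ⟨v, q⟩ (j + 3) := by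
  obtain ⟨i, rfl⟩ := Nat.exists_eq_add_of_le' hj
  rw [tSeq_pow_three hj, tSeq_eq_of_four_le (by omega), tSeq_eq_of_four_le (by omega),
    mk_zero_pow, mk_mul_mk_of_dvd
      ((F.p_sq_dvd_rootSubOne_pow_mul q (by omega) u).neg_right) F.root_zero, zero_add]
  congr 1
  simp only [show i + 2 - 1 = i + 1 by omega,
    show i + 2 + 2 - 1 = i + 3 by omega, show i + 2 + 3 - 1 = i + 4 by omega]
  push_cast
  linear_combination -u * F.three_mul_rootSubOne_pow q (n := i + 1) (by omega)

lemma tSeq_succ_eq_one : tSeq (⟨u, threeMul ρ⟩ : FrameGroup F a) ⟨v, q⟩ (c + 1) = 1 := by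
  have h5 := F.five_le
  rw [tSeq_eq_of_four_le (by omega), Nat.add_sub_cancel, F.rootSubOne_pow_eq_zero, zero_mul,
    neg_zero, one_def]

lemma tSeq_last_pow (n : ℕ) : tSeq (⟨u, threeMul ρ⟩ : FrameGroup F a) ⟨v, q⟩ c ^ n =
    ⟨-F.top (n * modThree q ^ (c - 1) * F.coeff₀ u), 0⟩ := by
  have h5 := F.five_le
  rw [tSeq_eq_of_four_le (by omega), mk_zero_pow, rootSubOne_pow_mul, mul_neg, mul_assoc,
    ← nsmul_eq_mul, ← nsmul_eq_mul, map_nsmul]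

lemma fcomm_tSeq_two_eq : fcomm (tSeq (⟨u, threeMul ρ⟩ : FrameGroup F a) ⟨v, q⟩ 2)
    ⟨u, threeMul ρ⟩ = central (modThree q * F.coeff₀ u ^ 2) := by
  obtain ⟨k, hk⟩ := exists_tSeq_eq_mul_central (F := F) (a := a) (u := u) (v := v) (ρ := ρ)
    (q := q) le_rfl
  rw [hk, fcomm_mul_left_of_mem_center (central_mem_center k), fcomm_mk_zero (by simp),
    rootSubOne_threeMul, zero_mul, ← one_def, one_mul]
  congr 1
  simp only [Nat.add_one_sub_one, pow_one, map_neg, coeff₁_mul, coeff₀_rootSubOne,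
    coeff₁_rootSubOne]
  ring

lemma x_cube_iff (hq : modThree q ≠ 0) (hu : F.coeff₀ u ≠ 0) (β : ℕ) :
    (⟨u, threeMul ρ⟩ : FrameGroup F a) ^ 3 =
        tSeq ⟨u, threeMul ρ⟩ ⟨v, q⟩ c ^ β * tSeq ⟨u, threeMul ρ⟩ ⟨v, q⟩ 5 *
          tSeq ⟨u, threeMul ρ⟩ ⟨v, q⟩ 4 ^ 2 * tSeq ⟨u, threeMul ρ⟩ ⟨v, q⟩ 3 ↔
      F.coeff₀ v = 0 ∧ β * modThree q ^ (c - 1) = b := by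
  have hk : modThree q * F.coeff₀ u * F.coeff₀ v = 0 ↔ F.coeff₀ v = 0 := by
    simp only [mul_eq_zero, hq, hu, false_or]
  have hu3 := F.three_add_rootSubOne_pow_mul hq u
  have hdvd {n : ℕ} (hn : 2 ≤ n) := F.p_sq_dvd_rootSubOne_pow_mul q hn u
  rw [mk_threeMul_pow_three, tSeq_last_pow, tSeq_eq_of_four_le (by norm_num),
    tSeq_eq_of_four_le le_rfl, mk_zero_pow, tSeq_three_eq, ← mul_assoc,
    mk_mul_mk_of_dvd (hdvd (n := 4) (by norm_num)).neg_right F.root_zero,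
    mk_mul_mk_of_dvd ((hdvd (n := 3) (by norm_num)).neg_right.mul_left _) F.root_zero,
    mk_mul_mk_of_dvd (hdvd le_rfl).neg_right F.root_zero, mk_mul_central, FrameGroup.mk.injEq,
    and_comm]
  simp only [add_zero, zero_add]
  rw [eq_comm, ← map_zero threeMul, threeMul_injective.eq_iff, hk]
  refine and_congr_right fun hv => ?_
  rw [hv, mul_zero, mul_zero, map_zero, add_zero, ← mul_left_inj' hu, ← F.top_injective.eq_iff]
  constructor <;> intro h
  · linear_combination h - hu3
  · linear_combination h + hu3

lemma mk_pow_three (hv : F.coeff₀ v = 0) (hq : modThree q ≠ 0) :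
    (⟨v, q⟩ : FrameGroup F a) ^ 3 = ⟨0, threeMul (modThree q)⟩ := by
  have hform (w : R) (hw : F.coeff₀ w = 0) : F.form w v = 0 := by simp [form, hw, hv]
  have hfst := F.one_add_root_add_sq_mul hq v
  rw [hv, mul_zero, map_zero, neg_zero] at hfst
  have hmul (w : R) (hw : F.coeff₀ w = 0) (r : ZMod 9) :
      (⟨w, r⟩ : FrameGroup F a) * ⟨v, q⟩ = ⟨F.root q * w + v, r + q⟩ := by
    rw [mk_mul_mk, hform _ (by rw [map_mul, hw, mul_zero])]
    simp only [mul_zero, map_zero, add_zero]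
  rw [pow_succ, sq, hmul v hv, hmul _ (by rw [map_add, map_mul, hv, mul_zero, add_zero])]
  rw [← three_mul_eq_threeMul]
  ext
  · linear_combination hfst
  · ring

lemma y_cube_iff (hv : F.coeff₀ v = 0) (hq : modThree q ≠ 0) (hu : F.coeff₀ u ≠ 0) (α : ℕ) :
    (⟨v, q⟩ : FrameGroup F a) ^ 3 = tSeq ⟨u, threeMul ρ⟩ ⟨v, q⟩ c ^ α *
        fcomm (tSeq ⟨u, threeMul ρ⟩ ⟨v, q⟩ 2) ⟨u, threeMul ρ⟩ ↔
      α * modThree q ^ (c - 1) = a * modThree q * F.coeff₀ u := by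
  have hu2 : F.coeff₀ u ^ 2 = 1 := by
    obtain h | h := eq_one_or_eq_neg_one_of_ne_zero hu <;> rw [h] <;> norm_num
  rw [mk_pow_three hv hq, tSeq_last_pow, fcomm_tSeq_two_eq, mk_mul_central, zero_add, hu2, mul_one,
    FrameGroup.mk.injEq, and_iff_left rfl, neg_add_eq_sub, eq_comm, sub_eq_zero,
    F.top_injective.eq_iff]
  constructor <;> intro h
  · linear_combination -F.coeff₀ u * h - α * modThree q ^ (c - 1) * hu2
  · linear_combination -F.coeff₀ u * h - a * modThree q * hu2

end Sequence

lemma isGUPair_mk_iff {u v : R} {ρ : ZMod 3} {q : ZMod 9} {α β : ℕ} (hq : modThree q ≠ 0)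
    (hu : F.coeff₀ u ≠ 0) : IsGUPair c α β (⟨u, threeMul ρ⟩ : FrameGroup F a) ⟨v, q⟩ ↔
      F.coeff₀ v = 0 ∧ β * modThree q ^ (c - 1) = b ∧
        α * modThree q ^ (c - 1) = a * modThree q * F.coeff₀ u := by
  constructor
  · intro h
    obtain ⟨hv, hβ⟩ := (x_cube_iff hq hu β).1 h.x_cube
    exact ⟨hv, hβ, (y_cube_iff hv hq hu α).1 h.y_cube⟩
  · rintro ⟨hv, hβ, hα⟩
    have h5 := F.five_le
    refine ⟨?_, fun j h2 _ => tSeq_cube_eq h2, ?_, (y_cube_iff hv hq hu α).2 hα,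
      (x_cube_iff hq hu β).2 ⟨hv, hβ⟩⟩
    · rw [fcomm_tSeq_two_eq, central_pow_three]
    · rw [tSeq_cube_eq (by omega), show c - 2 + 2 = c by omega, show c - 2 + 3 = c + 1 by omega,
        tSeq_succ_eq_one, mul_one]

lemma modThree_eq_zero_of_isGUPair {u v : R} {r q : ZMod 9} {α β : ℕ}
    (h : IsGUPair c α β (⟨u, r⟩ : FrameGroup F a) ⟨v, q⟩)
    (hdet : modThree r * F.coeff₀ v - modThree q * F.coeff₀ u ≠ 0) : modThree r = 0 := by
  set d := F.rootSubOne r * v - F.rootSubOne q * u with hd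
  have hd₀ : F.coeff₀ d = 0 := by simp [hd]
  have hd₁ : F.coeff₁ d = modThree r * F.coeff₀ v - modThree q * F.coeff₀ u := by
    simp [hd, coeff₁_mul]
  have hs : 3 * (F.rootSubOne r * d) = 0 := by
    have hs3 := h.s_cube
    rw [tSeq, fcomm_mk_mk v u q r hd, fcomm_mul_left_of_mem_center (central_mem_center _),
      fcomm_mk_zero hd₀, mk_mul_central_pow_three, one_def, FrameGroup.mk.injEq] at hs3
    exact hs3.1
  obtain ⟨w, hw, hw₀⟩ := F.exists_eq_p_mul (F.coeff₀_rootSubOne r)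
  obtain ⟨z, hz, hz₀⟩ := F.exists_eq_p_mul hd₀
  have hp : F.p ^ 4 * (w ^ 3 * (2 + F.rootSubOne r) * z) = 0 := by
    have h3 := F.three_mul_rootSubOne_pow r le_rfl
    have hP3 : F.rootSubOne r ^ 3 = F.p ^ 3 * w ^ 3 := by rw [hw, mul_pow]
    linear_combination hs - d * h3 - (2 + F.rootSubOne r) * d * hP3 -
      F.p ^ 3 * w ^ 3 * (2 + F.rootSubOne r) * hz
  have h0 := F.coeff₀_eq_zero_of_p_pow_mul F.five_le hp
  rw [map_mul, map_mul, map_pow, hw₀, hz₀, coeff₁_rootSubOne, hd₁, map_add, map_ofNat,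
    coeff₀_rootSubOne, add_zero, mul_eq_zero_iff_right hdet,
    mul_eq_zero_iff_right (by decide)] at h0
  exact pow_eq_zero_iff three_ne_zero |>.1 h0

lemma exists_exponents_eq_of_isGUPair {g h : FrameGroup F a} {α β : ℕ}
    (hgh : IsGUPair c α β g h) (hx : (⟨1, 0⟩ : FrameGroup F a) ∈ Subgroup.closure {g, h})
    (hy : (⟨0, 1⟩ : FrameGroup F a) ∈ Subgroup.closure {g, h}) :
    ∃ q w : ZMod 3, q ≠ 0 ∧ w ≠ 0 ∧ β * q ^ (c - 1) = b ∧ α * q ^ (c - 1) = a * w := by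
  obtain ⟨u, r⟩ := g
  obtain ⟨v, q⟩ := h
  have hdet := det_ne_zero_of_mem_closure hx hy
  have hr := modThree_eq_zero_of_isGUPair hgh hdet
  obtain ⟨ρ, rfl⟩ := exists_eq_threeMul hr
  rw [hr, zero_mul, zero_sub, neg_ne_zero, mul_ne_zero_iff] at hdet
  obtain ⟨hq, hu⟩ := hdet
  obtain ⟨-, hβ, hα⟩ := (isGUPair_mk_iff hq hu).1 hgh
  exact ⟨_, _, hq, mul_ne_zero hq hu, hβ, by rw [hα, mul_assoc]⟩

end FrameGroup

open FrameGroup in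
lemma exists_exponents_eq_of_mulEquiv {c : ℕ} (hc : 5 ≤ c) {α β a b : ℕ}
    (e : GU c (ryWord c α) (rxWord c β) ≃* GU c (ryWord c a) (rxWord c b)) :
    ∃ q w : ZMod 3, q ≠ 0 ∧ w ≠ 0 ∧ β * q ^ (c - 1) = b ∧ α * q ^ (c - 1) = a * w := by
  obtain ⟨n, rfl⟩ := Nat.exists_eq_add_of_le' hc
  let F := EisensteinInt.frame n b
  have hgens : IsGUPair (n + 5) a b (⟨1, 0⟩ : FrameGroup F a) ⟨0, 1⟩ := by
    rw [← map_zero threeMul, isGUPair_mk_iff] <;> simp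
  obtain ⟨φ, hx, hy⟩ := exists_hom_of_isGUPair hc hgens
  let ψ := φ.comp e.toMonoidHom
  have hrange : ψ.range = φ.range := by
    rw [MonoidHom.range_comp, MonoidHom.range_eq_top.2 e.surjective, ← MonoidHom.range_eq_map]
  have hmem : (⟨1, 0⟩ : FrameGroup F a) ∈ ψ.range ∧ ⟨0, 1⟩ ∈ ψ.range := by
    rw [hrange]
    exact ⟨⟨_, hx⟩, ⟨_, hy⟩⟩
  rw [range_eq_closure (by omega)] at hmem
  exact exists_exponents_eq_of_isGUPair ((isGUPair_of hc).map ψ) hmem.1 hmem.2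

lemma exponents_eq_of_mulEquiv {c : ℕ} (hc : 5 ≤ c) (hodd : Odd c) {α β a b : ℕ}
    (hα : α < 2) (hβ : β < 3) (ha : a < 2) (hb : b < 3)
    (e : GU c (ryWord c α) (rxWord c β) ≃* GU c (ryWord c a) (rxWord c b)) : α = a ∧ β = b := by
  obtain ⟨q, w, hq, hw, hβb, hαa⟩ := exists_exponents_eq_of_mulEquiv hc e
  have hpow : q ^ (c - 1) = 1 := by
    have heven : Even (c - 1) := hodd.tsub_odd odd_one
    obtain rfl | rfl := eq_one_or_eq_neg_one_of_ne_zero hq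
    · exact one_pow _
    · exact heven.neg_one_pow
  rw [hpow, mul_one] at hβb hαa
  constructor
  · interval_cases α <;> interval_cases a <;> simp_all
  · rwa [ZMod.natCast_eq_natCast_iff, Nat.ModEq, Nat.mod_eq_of_lt hβ, Nat.mod_eq_of_lt hb] at hβb

theorem GU_pairwise_nonisomorphic_of_odd (c : ℕ) (hc : 5 ≤ c) (hodd : Odd c) :
    ∀ Ry ∈ RySet c, ∀ Rx ∈ RxSet c, ∀ Ry' ∈ RySet c, ∀ Rx' ∈ RxSet c,
      (Ry, Rx) ≠ (Ry', Rx') →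
        IsEmpty (GU c Ry Rx ≃* GU c Ry' Rx') := by
  intro Ry hRy Rx hRx Ry' hRy' Rx' hRx' hne
  obtain ⟨α, hα, rfl⟩ := exists_eq_ryWord hRy
  obtain ⟨β, hβ, rfl⟩ := exists_eq_rxWord hRx
  obtain ⟨a, ha, rfl⟩ := exists_eq_ryWord hRy'
  obtain ⟨b, hb, rfl⟩ := exists_eq_rxWord hRx'
  refine ⟨fun e => hne ?_⟩
  obtain ⟨rfl, rfl⟩ := exponents_eq_of_mulEquiv hc hodd hα hβ ha hb e
  rfl
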